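/- Let D be a minimal strong digraph (MSD) and let C_q be a directed cycle of length q contained in D. Then the number α of linear vertices of D satisfies α ≥ ⌊(q+1)/2⌋. -/

import Mathlib

/-- A digraph (given by its arc relation `A`) is strongly connected if every vertex
can reach every vertex by a directed path. -/
def StronglyConnected {V : Type*} (A : V → V → Prop) : Prop :=
  ∀ u v : V, Relation.ReflTransGen A u v

/-- A minimal strong digraph: strongly connected, and deleting any arc destroys
strong connectivity. -/
def IsMSD {V : Type*} (A : V → V → Prop) : Prop :=
  StronglyConnected A ∧
    ∀ a b : V, A a b →
      ¬ StronglyConnected (fun x y => A x y ∧ ¬(x = a ∧ y = b))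

/-- `c : ZMod q → V` describes a directed cycle of length `q` contained in the digraph `A`. -/
def IsCycleIn {V : Type*} (A : V → V → Prop) (q : ℕ) (c : ZMod q → V) : Prop :=
  2 ≤ q ∧ Function.Injective c ∧ ∀ i : ZMod q, A (c i) (c (i + 1))

/-- The digraph `D'` obtained from `A` by deleting all arcs of the cycle `c`. -/
def DelCycle {V : Type*} (A : V → V → Prop) (q : ℕ) (c : ZMod q → V) : V → V → Prop :=
  fun x y => A x y ∧ ¬ ∃ i : ZMod q, x = c i ∧ y = c (i + 1)

/-- Mutual reachability of two vertices. -/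
def MutReach {V : Type*} (A : V → V → Prop) (u v : V) : Prop :=
  Relation.ReflTransGen A u v ∧ Relation.ReflTransGen A v u

/-- `S` is (the vertex set of) a strong component of the digraph `A`. -/
def IsSC {V : Type*} (A : V → V → Prop) (S : Set V) : Prop :=
  ∃ v : V, S = {u | MutReach A v u}

/-- Indegree of `v`. -/
noncomputable def indeg {V : Type*} (A : V → V → Prop) (v : V) : ℕ := {u | A u v}.ncard

/-- Outdegree of `v`. -/
noncomputable def outdeg {V : Type*} (A : V → V → Prop) (v : V) : ℕ := {u | A v u}.ncard

/-- A vertex is linear if its indegree and outdegree both equal 1. -/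
def IsLinear {V : Type*} (A : V → V → Prop) (v : V) : Prop :=
  indeg A v = 1 ∧ outdeg A v = 1

/-- A vertex `v` is a cut point if deleting `v` (and its incident arcs) leaves a
digraph whose underlying graph is disconnected. -/
def IsCutPoint {V : Type*} (A : V → V → Prop) (v : V) : Prop :=
  ∃ x y : V, x ≠ v ∧ y ≠ v ∧
    ¬ Relation.ReflTransGen (fun a b => a ≠ v ∧ b ≠ v ∧ (A a b ∨ A b a)) x y

/-- Adjacency in the condensation (Hasse diagram) of the digraph `A`:
two distinct strong components with an arc from the first to the second. -/
def HAdj {V : Type*} (A : V → V → Prop) (S T : Set V) : Prop :=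
  IsSC A S ∧ IsSC A T ∧ S ≠ T ∧ ∃ u ∈ S, ∃ v ∈ T, A u v

noncomputable def HIndeg {V : Type*} (A : V → V → Prop) (S : Set V) : ℕ := {T : Set V | HAdj A T S}.ncard
noncomputable def HOutdeg {V : Type*} (A : V → V → Prop) (S : Set V) : ℕ := {T : Set V | HAdj A S T}.ncard

/-- A vertex of the Hasse diagram is linear if its indegree and outdegree there equal 1. -/
def HLinear {V : Type*} (A : V → V → Prop) (S : Set V) : Prop :=
  HIndeg A S = 1 ∧ HOutdeg A S = 1

/-- Four elements of `ZMod q` appear in this cyclic order (all distinct). -/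
def CyclicOrder4 {q : ℕ} (a b c d : ZMod q) : Prop :=
  0 < (b - a).val ∧ (b - a).val < (c - a).val ∧ (c - a).val < (d - a).val

/-!
Deleting an arc `a → b` of an MSD leaves `a` in a strong component `S` that misses `b`, so `S` is
proper. A proper nonempty vertex set `S` inducing a strong subdigraph always misses a linear
vertex: enlarge `S` to a maximal such set and take an arc `s → w` leaving it, continued by a path
`w → y → ⋯ → s` that does not return to `w`. Of the arcs at `w`, keep only `s → w` and `w → y`.
The strong component of `s` still contains `S` and `w`, so by maximality it is everything, and by
minimality of the digraph no arc was discarded: `w` is linear.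

Call `x` on the cycle `C` bad if it has outdegree at least 2, and delete an off-cycle arc at `x`.
What `x` then reaches contains `C` and misses a linear vertex `g x`. For bad `x ≠ x'` the two
reachable sets cover the digraph, so `g` is injective and there are at most as many bad vertices
as there are linear vertices outside `C`. Reversing all arcs gives the same bound for the vertices
of indegree at least 2. If `m` and `l` count the linear vertices on and off `C`, then
`q ≤ m + 2 * l ≤ 2 * (m + l)`.
-/

open Relation

section Digraph

variable {V : Type*} {A B : V → V → Prop} {S : Set V} {a b s u v w x y z : V}

/-- Deletion of the arc `a → b`. Written so that it unfolds to the digraph in `IsMSD`. -/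
def DelArc (A : V → V → Prop) (a b : V) : V → V → Prop :=
  fun x y => A x y ∧ ¬(x = a ∧ y = b)

/-- Deletion of the vertex `w`. The vertex type is kept, so `w` becomes isolated. -/
def DelVertex (A : V → V → Prop) (w : V) : V → V → Prop :=
  fun x y => A x y ∧ x ≠ w ∧ y ≠ w

/-- The digraph in which `w` is made linear: all its arcs are replaced by `s → w` and `w → y`.
It is a subdigraph of `A` when both of these are arcs of `A`. -/
def LinearizeAt (A : V → V → Prop) (s w y : V) : V → V → Prop :=
  fun u v => DelVertex A w u v ∨ (u = s ∧ v = w) ∨ (u = w ∧ v = y)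

theorem StronglyConnected.exists_arc_leaving (hA : StronglyConnected A) (hS : S.Nonempty)
    (hSne : S ≠ Set.univ) : ∃ s ∈ S, ∃ w ∉ S, A s w := by
  obtain ⟨u, hu⟩ := hS
  by_contra! hclosed
  refine hSne (Set.eq_univ_of_forall fun v => ?_)
  induction hA u v with
  | refl => exact hu
  | tail _ hyz hy => exact by_contra fun hz => hclosed _ hy _ hz hyz

theorem StronglyConnected.swap (hA : StronglyConnected A) :
    StronglyConnected (Function.swap A) :=
  fun u v => reflTransGen_swap.2 (hA v u)

theorem stronglyConnected_mutReach (hBA : B ≤ A) (s : V) :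
    StronglyConnected fun x y : {z | MutReach B s z} => A x y := by
  rintro ⟨u, hu⟩ ⟨v, hv⟩
  have huv : ReflTransGen B u v := hu.2.trans hv.1
  induction huv using ReflTransGen.head_induction_on with
  | refl => exact .refl
  | head hux hxv ih => exact .head (hBA _ _ hux) (ih ⟨hu.1.tail hux, hxv.trans hv.2⟩)

theorem outdeg_eq_one_iff : outdeg A v = 1 ↔ ∃ y, ∀ z, A v z ↔ z = y := by
  simp only [outdeg, Set.ncard_eq_one, Set.ext_iff, Set.mem_ofPred_eq, Set.mem_singleton_iff]

theorem indeg_eq_one_iff : indeg A v = 1 ↔ ∃ y, ∀ z, A z v ↔ z = y :=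
  outdeg_eq_one_iff (A := Function.swap A)

theorem isLinear_swap : IsLinear (Function.swap A) v ↔ IsLinear A v :=
  and_comm

theorem isLinear_linearizeAt (hsw : s ≠ w) (hyw : y ≠ w) : IsLinear (LinearizeAt A s w y) w := by
  refine ⟨indeg_eq_one_iff.2 ⟨s, fun z => ?_⟩, outdeg_eq_one_iff.2 ⟨y, fun z => ?_⟩⟩ <;>
    grind [LinearizeAt, DelVertex]

theorem exists_arc_reflTransGen_delVertex (hws : w ≠ s) (h : ReflTransGen A w s) :
    ∃ y, A w y ∧ y ≠ w ∧ ReflTransGen (DelVertex A w) y s := by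
  suffices key : ∀ z, ReflTransGen A z s →
      (z ≠ w ∧ ReflTransGen (DelVertex A w) z s) ∨
        ∃ y, A w y ∧ y ≠ w ∧ ReflTransGen (DelVertex A w) y s from
    (key w h).resolve_left fun hw => hw.1 rfl
  intro z hz
  induction hz using ReflTransGen.head_induction_on with
  | refl => exact .inl ⟨hws.symm, .refl⟩
  | @head u v huv _ ih =>
    refine ih.elim (fun ⟨hvw, hvs⟩ => ?_) .inr
    by_cases huw : u = w
    · exact .inr ⟨v, huw ▸ huv, hvw, hvs⟩
    · exact .inl ⟨huw, .head ⟨huv, huw, hvw⟩ hvs⟩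

theorem exists_insert_subset_mutReach_linearizeAt (hA : StronglyConnected A) (hS : S.Nonempty)
    (hSne : S ≠ Set.univ) (hSA : StronglyConnected fun x y : S => A x y) :
    ∃ s w y, s ≠ w ∧ y ≠ w ∧ w ∉ S ∧ LinearizeAt A s w y ≤ A ∧
      insert w S ⊆ {z | MutReach (LinearizeAt A s w y) s z} := by
  obtain ⟨s, hs, w, hw, hsw⟩ := hA.exists_arc_leaving hS hSne
  have hne : s ≠ w := ne_of_mem_of_not_mem hs hw
  obtain ⟨y, hwy, hyw, hys⟩ := exists_arc_reflTransGen_delVertex hne.symm (hA w s)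
  have hwMut : MutReach (LinearizeAt A s w y) s w :=
    ⟨.single (.inr (.inl ⟨rfl, rfl⟩)),
      .head (.inr (.inr ⟨rfl, rfl⟩)) (ReflTransGen.mono (fun _ _ => .inl) _ _ hys)⟩
  have hSreach : ∀ u ∈ S, ∀ v ∈ S, ReflTransGen (LinearizeAt A s w y) u v := fun u hu v hv =>
    (hSA ⟨u, hu⟩ ⟨v, hv⟩).lift Subtype.val fun x z hxz =>
      .inl ⟨hxz, ne_of_mem_of_not_mem x.2 hw, ne_of_mem_of_not_mem z.2 hw⟩
  refine ⟨s, w, y, hne, hyw, hw, ?_, ?_⟩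
  · rintro u v (huv | ⟨rfl, rfl⟩ | ⟨rfl, rfl⟩)
    exacts [huv.1, hsw, hwy]
  · exact Set.insert_subset hwMut fun z hz => ⟨hSreach s hs z hz, hSreach z hz s hs⟩

theorem reflTransGen_delArc_source (b : V) (h : ReflTransGen A u a) :
    ReflTransGen (DelArc A a b) u a := by
  induction h using ReflTransGen.head_induction_on with
  | refl => exact .refl
  | @head u v huv _ ih =>
    by_cases hua : u = a
    · rw [hua]
    · exact .head ⟨huv, fun h => hua h.1⟩ ih

theorem reflTransGen_delArc_or (hxy : x ≠ y) (hx : ReflTransGen (DelArc A x a) x y)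
    (hy : ReflTransGen (DelArc A y b) y x) (h : ReflTransGen A x z) :
    ReflTransGen (DelArc A x a) x z ∨ ReflTransGen (DelArc A y b) y z := by
  induction h with
  | refl => exact .inl .refl
  | @tail u v _ huv ih =>
    by_cases hux : u = x
    · exact .inr (hy.tail ⟨hux ▸ huv, fun h => hxy h.1⟩)
    by_cases huy : u = y
    · exact .inl (hx.tail ⟨huy ▸ huv, fun h => hxy h.1.symm⟩)
    exact ih.imp (·.tail ⟨huv, fun h => hux h.1⟩) (·.tail ⟨huv, fun h => huy h.1⟩)

end Digraph

namespace IsMSD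

variable {V : Type*} {A B : V → V → Prop} {a b : V}

theorem eq_of_stronglyConnected (hA : IsMSD A) (hBA : B ≤ A)
    (hB : StronglyConnected B) : B = A := by
  ext a b
  refine ⟨hBA a b, fun hab => by_contra fun hnot => hA.2 a b hab fun u v => ?_⟩
  refine ReflTransGen.mono (fun x y hxy => ⟨hBA x y hxy, ?_⟩) _ _ (hB u v)
  rintro ⟨rfl, rfl⟩
  exact hnot hxy

theorem swap (hA : IsMSD A) : IsMSD (Function.swap A) := by
  refine ⟨hA.1.swap, fun a b hab h => hA.2 b a hab fun u v => ?_⟩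
  exact ReflTransGen.mono (fun x y hxy => ⟨hxy.1, fun hba => hxy.2 hba.symm⟩) _ _ (h.swap u v)

theorem not_reflTransGen_delArc (hA : IsMSD A) (hab : A a b) :
    ¬ ReflTransGen (DelArc A a b) a b := fun h =>
  hA.2 a b hab fun u v => (hA.1 u v).lift' id fun x y hxy => by
    by_cases hxy' : x = a ∧ y = b
    · rwa [hxy'.1, hxy'.2]
    · exact .single ⟨hxy, hxy'⟩

variable [Finite V]

theorem exists_isLinear_notMem (hA : IsMSD A) {S : Set V} (hS : S.Nonempty)
    (hSne : S ≠ Set.univ) (hSA : StronglyConnected fun x y : S => A x y) :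
    ∃ v ∉ S, IsLinear A v := by
  let P : Set (Set V) := {T | T ≠ Set.univ ∧ StronglyConnected fun x y : T => A x y}
  obtain ⟨M, hSM, ⟨hMne, hMA⟩, hmax⟩ := P.toFinite.exists_le_maximal ⟨hSne, hSA⟩
  obtain ⟨s, w, y, hsw, hyw, hwM, hle, hsub⟩ :=
    exists_insert_subset_mutReach_linearizeAt hA.1 (hS.mono hSM) hMne hMA
  have huniv : {z | MutReach (LinearizeAt A s w y) s z} = Set.univ := by
    by_contra hne
    exact hwM (hmax ⟨hne, stronglyConnected_mutReach hle s⟩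
      ((Set.subset_insert w M).trans hsub) (hsub (Set.mem_insert w M)))
  have hstrong : StronglyConnected (LinearizeAt A s w y) := fun u v =>
    (Set.eq_univ_iff_forall.1 huniv u).2.trans (Set.eq_univ_iff_forall.1 huniv v).1
  refine ⟨w, fun hw => hwM (hSM hw), ?_⟩
  rw [← hA.eq_of_stronglyConnected hle hstrong]
  exact isLinear_linearizeAt hsw hyw

theorem exists_isLinear_not_reflTransGen_delArc (hA : IsMSD A) (hab : A a b) :
    ∃ v, IsLinear A v ∧ ¬ ReflTransGen (DelArc A a b) a v := by
  let S := {z | MutReach (DelArc A a b) a z}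
  have ha : a ∈ S := ⟨.refl, .refl⟩
  have hb : b ∉ S := fun h => hA.not_reflTransGen_delArc hab h.1
  have hS : StronglyConnected fun x y : S => A x y :=
    stronglyConnected_mutReach (fun _ _ h => h.1) a
  obtain ⟨v, hv, hlin⟩ :=
    hA.exists_isLinear_notMem ⟨a, ha⟩ ((Set.ne_univ_iff_exists_notMem S).2 ⟨b, hb⟩) hS
  exact ⟨v, hlin, fun h => hv ⟨h, reflTransGen_delArc_source b (hA.1 v a)⟩⟩

theorem ncard_le_ncard_isLinear_diff (hA : IsMSD A) {X K : Set V} {f : V → V} (hXK : X ⊆ K)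
    (hf : ∀ x ∈ X, A x (f x))
    (hK : ∀ x ∈ X, ∀ k ∈ K, ReflTransGen (DelArc A x (f x)) x k) :
    X.ncard ≤ ({v | IsLinear A v} \ K).ncard := by
  choose! g hlin hg using fun x hx => hA.exists_isLinear_not_reflTransGen_delArc (hf x hx)
  refine Set.ncard_le_ncard_of_injOn g (fun x hx => ⟨hlin x hx, fun h => hg x hx (hK x hx _ h)⟩) ?_
  intro x hx y hy hxy
  by_contra hne
  rcases reflTransGen_delArc_or hne (hK x hx y (hXK hy)) (hK y hy x (hXK hx))
    (hA.1 x (g x)) with h | h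
  · exact hg x hx h
  · exact hg y hy (hxy ▸ h)

end IsMSD

namespace IsCycleIn

variable {V : Type*} {A : V → V → Prop} {q : ℕ} {c : ZMod q → V} {i : ZMod q} {b : V}

theorem ncard_range (hc : IsCycleIn A q c) : (Set.range c).ncard = q := by
  rw [Set.ncard_range_of_injective hc.2.1, Nat.card_zmod]

theorem swap (hc : IsCycleIn A q c) : IsCycleIn (Function.swap A) q (c ∘ Neg.neg) := by
  refine ⟨hc.1, hc.2.1.comp neg_injective, fun i => ?_⟩
  have h := hc.2.2 (-(i + 1))
  rwa [neg_add, neg_add_cancel_right, ← neg_add] at h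

theorem exists_arc_ne_succ (hc : IsCycleIn A q c) (hi : outdeg A (c i) ≠ 1) :
    ∃ b, A (c i) b ∧ b ≠ c (i + 1) := by
  by_contra! h
  exact hi (outdeg_eq_one_iff.2 ⟨c (i + 1), fun z => ⟨h z, fun hz => hz ▸ hc.2.2 i⟩⟩)

theorem reflTransGen_delArc (hc : IsCycleIn A q c) (hb : b ≠ c (i + 1)) (j : ZMod q) :
    ReflTransGen (DelArc A (c i) b) (c i) (c j) := by
  have : NeZero q := ⟨by have := hc.1; omega⟩
  have hadd : ∀ n : ℕ, ReflTransGen (DelArc A (c i) b) (c i) (c (i + n)) := by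
    intro n
    induction n with
    | zero => rw [Nat.cast_zero, add_zero]
    | succ n ih =>
      rw [Nat.cast_succ, ← add_assoc]
      refine ih.tail ⟨hc.2.2 _, fun ⟨hsource, htarget⟩ => hb ?_⟩
      rw [← htarget, hc.2.1 hsource]
  have h := hadd (j - i).val
  rwa [ZMod.natCast_zmod_val, add_sub_cancel] at h

variable [Finite V]

theorem ncard_outdeg_ne_one_le (hc : IsCycleIn A q c) (hA : IsMSD A) :
    {v ∈ Set.range c | outdeg A v ≠ 1}.ncard ≤ ({v | IsLinear A v} \ Set.range c).ncard := by
  have hoff : ∀ x ∈ {v ∈ Set.range c | outdeg A v ≠ 1},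
      ∃ y, A x y ∧ ∀ k ∈ Set.range c, ReflTransGen (DelArc A x y) x k := by
    rintro _ ⟨⟨i, rfl⟩, hi⟩
    obtain ⟨y, hy, hne⟩ := hc.exists_arc_ne_succ hi
    exact ⟨y, hy, Set.forall_mem_range.2 (hc.reflTransGen_delArc hne)⟩
  choose! f hf hreach using hoff
  exact hA.ncard_le_ncard_isLinear_diff (fun _ hx => hx.1) hf hreach

theorem ncard_indeg_ne_one_le (hc : IsCycleIn A q c) (hA : IsMSD A) :
    {v ∈ Set.range c | indeg A v ≠ 1}.ncard ≤ ({v | IsLinear A v} \ Set.range c).ncard := by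
  have h := hc.swap.ncard_outdeg_ne_one_le hA.swap
  simp only [isLinear_swap, neg_surjective.range_comp] at h
  exact h

end IsCycleIn

/-- An MSD containing a directed cycle of length `q` has at least
`⌊(q+1)/2⌋` linear vertices. -/
theorem stmt12 {V : Type*} [Fintype V] (A : V → V → Prop) (q : ℕ) (c : ZMod q → V)
    (hMSD : IsMSD A) (hc : IsCycleIn A q c) :
    (q + 1) / 2 ≤ {v : V | IsLinear A v}.ncard := by
  set L := {v : V | IsLinear A v}
  set X := {v ∈ Set.range c | outdeg A v ≠ 1}
  set Y := {v ∈ Set.range c | indeg A v ≠ 1}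
  have hcover : Set.range c ⊆ (L ∩ Set.range c) ∪ (X ∪ Y) := by
    intro v hv
    by_cases hout : outdeg A v = 1
    · by_cases hin : indeg A v = 1
      · exact .inl ⟨⟨hin, hout⟩, hv⟩
      · exact .inr (.inr ⟨hv, hin⟩)
    · exact .inr (.inl ⟨hv, hout⟩)
  have hcount : q ≤ (L ∩ Set.range c).ncard + (X.ncard + Y.ncard) :=
    calc q = (Set.range c).ncard := hc.ncard_range.symm
      _ ≤ ((L ∩ Set.range c) ∪ (X ∪ Y)).ncard := Set.ncard_le_ncard hcover
      _ ≤ (L ∩ Set.range c).ncard + (X ∪ Y).ncard := Set.ncard_union_le _ _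
      _ ≤ _ := Nat.add_le_add_left (Set.ncard_union_le _ _) _
  have hX : X.ncard ≤ (L \ Set.range c).ncard := hc.ncard_outdeg_ne_one_le hMSD
  have hY : Y.ncard ≤ (L \ Set.range c).ncard := hc.ncard_indeg_ne_one_le hMSD
  have hL := Set.ncard_inter_add_ncard_sdiff_eq_ncard L (Set.range c)
  omega
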